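/- In the setting of the previous proposition (φ non-polynomial, analytic at 0 with nonnegative Taylor coefficients, satisfying E(x,φ(x)) = 0 for an irreducible E with real proper rational parametrization P = (x̂,ŷ), x̂(∞) = ∞, s₀ the real point parametrizing φ at 0, s_c the critical point and x_c = x̂(s_c) the dominant singularity of φ), assume additionally that s_c is the only critical point s of P with |x̂(s)| = x_c. Then there exists an open neighborhood V of s₀ with s_c ∈ ∂V and ε > 0 such that x̂ restricted to V is a conformal bijection from V onto the slit disk at x_c of margin ε, and φ admits an analytic continuation to this slit disk. -/

import Mathlib

open Polynomial

/-- A rational map of the Riemann sphere, given by a pair of coprime polynomials. -/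
structure RationalMap where
  num : Polynomial ℂ
  den : Polynomial ℂ
  den_ne_zero : den ≠ 0
  coprime : IsCoprime num den

namespace RationalMap

/-- The finite-valued function `s ↦ num(s)/den(s)` (junk value `0` at poles). -/
noncomputable def toFun (f : RationalMap) (s : ℂ) : ℂ := f.num.eval s / f.den.eval s

/-- Evaluation as a map to the Riemann sphere `ℂ ∪ {∞}`. -/
noncomputable def eval (f : RationalMap) (s : ℂ) : OnePoint ℂ :=
  if f.den.eval s = 0 then OnePoint.infty else ((f.toFun s : ℂ) : OnePoint ℂ)

/-- The value of the rational map at the point `∞` of the Riemann sphere. -/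
noncomputable def evalInf (f : RationalMap) : OnePoint ℂ :=
  if f.den.degree < f.num.degree then OnePoint.infty
  else ((f.num.coeff f.den.natDegree / f.den.leadingCoeff : ℂ) : OnePoint ℂ)

/-- A rational map is real if (after clearing a common constant) its numerator and
denominator can be written with real coefficients. -/
def IsReal (f : RationalMap) : Prop :=
  ∃ (c : ℂ) (P Q : Polynomial ℝ), c ≠ 0 ∧
    c • f.num = P.map (algebraMap ℝ ℂ) ∧ c • f.den = Q.map (algebraMap ℝ ℂ)

end RationalMap

/-- Evaluation of a bivariate polynomial `E` at `(x,y)`. -/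
noncomputable def evalE (E : MvPolynomial (Fin 2) ℂ) (x y : ℂ) : ℂ :=
  MvPolynomial.eval ![x, y] E

/-- `(X,Y)` is a rational parametrization of the curve `E(x,y) = 0`:
`E(X(s), Y(s)) = 0` for all but finitely many `s ∈ ℂ`. -/
def IsParametrization (E : MvPolynomial (Fin 2) ℂ) (X Y : RationalMap) : Prop :=
  Set.Finite {s : ℂ |
    ¬ (X.den.eval s ≠ 0 ∧ Y.den.eval s ≠ 0 ∧ evalE E (X.toFun s) (Y.toFun s) = 0)}

/-- The parametrization `(X,Y)` is proper: for all but finitely many points `(x,y)` on the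
curve, the equation `(X(s), Y(s)) = (x,y)` has exactly one solution `s ∈ ℂ`. -/
def IsProper (E : MvPolynomial (Fin 2) ℂ) (X Y : RationalMap) : Prop :=
  Set.Finite {P : ℂ × ℂ | evalE E P.1 P.2 = 0 ∧
    ¬ ∃! s : ℂ, X.eval s = ((P.1 : ℂ) : OnePoint ℂ) ∧ Y.eval s = ((P.2 : ℂ) : OnePoint ℂ)}

/-- `s` is a critical point of the parametrization `(X,Y)` if `X′(s) = 0` (as a rational
function, i.e. the numerator `num′·den − num·den′` of the derivative vanishes at `s`) or
`Y(s) = ∞`. -/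
def IsCriticalPt (X Y : RationalMap) (s : ℂ) : Prop :=
  (X.num.derivative * X.den - X.num * X.den.derivative).eval s = 0 ∨ Y.den.eval s = 0

/-- The slit disk at `x > 0` of margin `ε > 0`. -/
def slitDisk (x ε : ℝ) : Set ℂ :=
  Metric.ball (0 : ℂ) (x + ε) \ (Complex.ofReal '' Set.Icc x (x + ε))

/-!
A rational map `X` with `X(∞) = ∞` is proper off its poles, so it is a covering map over the set of
its regular values, and it maps each connected component (a *sheet*) of the preimage of a domain
onto that domain. By analytic continuation, `Y = φ ∘ X` on the sheet of `s₀` over any domain to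
which `φ` extends; as `(X, Y)` is injective up to finitely many points and `X` is open, `X` is
then injective on this sheet.

On `[s₀, s_c)` the map `X` is real, increasing, and locally invertible, so `Y` composed with its
local inverses continues `φ` along `[0, x_c)`; by Pringsheim's theorem, the Taylor series converges
on the disk of radius `x_c`. The preimage of a thin annulus around the circle of radius `x_c`, slit
along the positive axis, contains no critical point. The slit annulus being simply connected, `X`
has a section `σ` there which meets the sheet of `s₀` over the disk, and `Y ∘ σ` continues `φ` to
the slit disk. The sheet of `s₀` over the slit disk is the required neighbourhood.
-/

open Filter Topology Metric Set

/-! ### Holomorphic functions -/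

section Holomorphic

variable {f : ℂ → ℂ} {V : Set ℂ} {z : ℂ}

lemma not_eventually_const_of_injOn (hV : IsOpen V) (hinj : InjOn f V) (hz : z ∈ V) :
    ¬ ∀ᶠ t in 𝓝 z, f t = f z := fun h =>
  infinite_of_mem_nhds z (inter_mem h (hV.mem_nhds hz)) <|
    Set.Subsingleton.finite fun _ hs _ ht => hinj hs.2 ht.2 (hs.1.trans ht.1.symm)

lemma exists_openPartialHomeomorph_of_injOn (hV : IsOpen V) (hf : DifferentiableOn ℂ f V)
    (hinj : InjOn f V) : ∃ e : OpenPartialHomeomorph ℂ ℂ, e.source = V ∧ ⇑e = f := by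
  have hopen : IsOpenMap (V.domRestrict f) := by
    refine isOpenMap_iff_nhds_le.2 fun z => ?_
    rw [domRestrict_eq, ← Filter.map_map, map_nhds_subtype_coe_eq_nhds z.2 (hV.mem_nhds z.2)]
    exact (hf.analyticAt (hV.mem_nhds z.2)).eventually_constant_or_nhds_le_map_nhds.resolve_left
      (not_eventually_const_of_injOn hV hinj z.2)
  exact ⟨.ofContinuousOpenRestrict (hinj.toPartialEquiv f V) hf.continuousOn hopen hV, rfl, rfl⟩

lemma eventually_deriv_ne_zero_of_injOn (hV : IsOpen V) (hf : DifferentiableOn ℂ f V)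
    (hinj : InjOn f V) (hz : z ∈ V) : ∀ᶠ t in 𝓝[≠] z, deriv f t ≠ 0 := by
  refine (hf.analyticAt
    (hV.mem_nhds hz)).deriv.eventually_eq_zero_or_eventually_ne_zero.resolve_left fun h => ?_
  obtain ⟨δ, hδ, hball⟩ := Metric.eventually_nhds_iff_ball.1 (h.and (hV.mem_nhds hz))
  refine not_eventually_const_of_injOn hV hinj hz ?_
  filter_upwards [ball_mem_nhds z hδ] with t ht
  exact isOpen_ball.is_const_of_deriv_eq_zero (convex_ball z δ).isPreconnected
    (hf.mono fun t ht => (hball t ht).2) (fun t ht => (hball t ht).1) ht (mem_ball_self hδ)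

-- The inverse is continuous, and holomorphic off the critical values, so Riemann's removable
-- singularity theorem makes it holomorphic everywhere.
lemma deriv_ne_zero_of_injOn (hV : IsOpen V) (hf : DifferentiableOn ℂ f V) (hinj : InjOn f V)
    (hz : z ∈ V) : deriv f z ≠ 0 := by
  have hd : ∀ t ∈ V, HasDerivAt f (deriv f t) t := fun t ht =>
    (hf.differentiableAt (hV.mem_nhds ht)).hasDerivAt
  have hcrit := eventually_deriv_ne_zero_of_injOn hV hf hinj hz
  obtain ⟨e, rfl, rfl⟩ := exists_openPartialHomeomorph_of_injOn hV hf hinj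
  have hez : e z ∈ e.target := e.map_source hz
  have hsymm : Tendsto e.symm (𝓝[≠] (e z)) (𝓝[≠] z) := by
    refine tendsto_nhdsWithin_iff.2 ⟨(e.tendsto_symm hz).mono_left nhdsWithin_le_nhds, ?_⟩
    filter_upwards [self_mem_nhdsWithin, nhdsWithin_le_nhds (e.open_target.mem_nhds hez)]
      with w hw hwt h
    exact hw (by rw [mem_singleton_iff, ← e.right_inv hwt, mem_singleton_iff.1 h])
  have hpunctured : ∀ᶠ w in 𝓝[≠] (e z), DifferentiableAt ℂ e.symm w := by
    filter_upwards [hsymm.eventually hcrit, nhdsWithin_le_nhds (e.open_target.mem_nhds hez)]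
      with w hw hwt
    exact (e.hasDerivAt_symm hwt hw (hd _ (e.map_target hwt))).differentiableAt
  have hinv := (Complex.analyticAt_of_differentiable_on_punctured_nhds_of_continuousAt hpunctured
    (e.continuousAt_symm hez)).differentiableAt.hasDerivAt
  have hid := (hinv.comp z (hd z hz)).congr_of_eventuallyEq
    (Filter.EventuallyEq.symm (e.eventually_left_inverse hz))
  exact right_ne_zero_of_mul_eq_one (hid.unique (hasDerivAt_id z))

lemma exists_analyticAt_comp_eventuallyEq {h : ℂ → ℂ} (hf : AnalyticAt ℂ f z)
    (hf' : deriv f z ≠ 0) (hh : AnalyticAt ℂ h z) :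
    ∃ G : ℂ → ℂ, AnalyticAt ℂ G (f z) ∧ ∀ᶠ t in 𝓝 z, G (f t) = h t := by
  have hleft := hf.hasStrictDerivAt.eventually_left_inverse hf'
  refine ⟨h ∘ hf.hasStrictDerivAt.localInverse _ _ _ hf',
    AnalyticAt.comp ?_ (hf.analyticAt_localInverse hf'), hleft.mono fun t ht => congrArg h ht⟩
  rwa [hleft.self_of_nhds]

lemma exists_differentiableOn_union {U A : Set ℂ} {F H : ℂ → ℂ} (hU : IsOpen U) (hA : IsOpen A)
    (hF : DifferentiableOn ℂ F U) (hH : DifferentiableOn ℂ H A) (heq : EqOn F H (U ∩ A)) :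
    ∃ G : ℂ → ℂ, DifferentiableOn ℂ G (U ∪ A) ∧ EqOn G F U := by
  classical
  have hGU : EqOn (U.piecewise F H) F U := piecewise_eqOn U F H
  have hGA : EqOn (U.piecewise F H) H A := fun w hw => by
    by_cases hwU : w ∈ U
    · exact (hGU hwU).trans (heq ⟨hwU, hw⟩)
    · exact piecewise_eq_of_notMem U F H hwU
  exact ⟨U.piecewise F H, (hF.congr hGU).union_of_isOpen (hH.congr hGA) hU hA, hGU⟩

end Holomorphic

/-! ### Power series with nonnegative coefficients -/

section PowerSeries

variable {c : ℕ → ℝ} {R a : ℝ}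

/-- The sum of the power series with real coefficients `c` at a complex point, with the junk value
`0` where the series diverges. -/
noncomputable def powerSum (c : ℕ → ℝ) (z : ℂ) : ℂ := ∑' n, (c n : ℂ) * z ^ n

lemma summable_mul_pow_of_le (hc : ∀ n, 0 ≤ c n) {x y : ℝ} (hx : 0 ≤ x) (hxy : x ≤ y)
    (hy : Summable fun n => c n * y ^ n) : Summable fun n => c n * x ^ n :=
  hy.of_nonneg_of_le (fun n => mul_nonneg (hc n) (pow_nonneg hx n)) fun n =>
    mul_le_mul_of_nonneg_left (pow_le_pow_left₀ hx hxy n) (hc n)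

lemma mul_pow_le_norm_powerSum (hc : ∀ n, 0 ≤ c n) {x : ℝ} (hx : 0 ≤ x)
    (hs : Summable fun n => c n * x ^ n) (n : ℕ) : c n * x ^ n ≤ ‖powerSum c (x : ℂ)‖ := by
  have hterm : ∀ n, 0 ≤ c n * x ^ n := fun n => mul_nonneg (hc n) (pow_nonneg hx n)
  have hreal : powerSum c (x : ℂ) = ((∑' n, c n * x ^ n : ℝ) : ℂ) := by
    simp [powerSum, Complex.ofReal_tsum]
  rw [hreal, Complex.norm_real, Real.norm_of_nonneg (tsum_nonneg hterm)]
  exact hs.le_tsum n fun m _ => hterm m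

lemma differentiableOn_powerSum (hc : ∀ n, 0 ≤ c n)
    (hsum : ∀ x, 0 ≤ x → x < R → Summable fun n => c n * x ^ n) :
    DifferentiableOn ℂ (powerSum c) (ball 0 R) := by
  intro z hz
  obtain ⟨x, hzx, hxR⟩ := exists_between (mem_ball_zero_iff.1 hz)
  have hdiff : DifferentiableOn ℂ (powerSum c) (ball 0 x) := by
    refine Complex.differentiableOn_tsum_of_summable_norm (u := fun n => c n * x ^ n)
      (hsum x ((norm_nonneg z).trans hzx.le) hxR) (fun n => by fun_prop) isOpen_ball
      fun n w hw => ?_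
    rw [norm_mul, norm_pow, Complex.norm_real, Real.norm_of_nonneg (hc n)]
    gcongr
    · exact hc n
    · exact (mem_ball_zero_iff.1 hw).le
  exact (hdiff.differentiableAt
    (isOpen_ball.mem_nhds (mem_ball_zero_iff.2 hzx))).differentiableWithinAt

lemma hasSum_choose_mul_pow {α : Type*} [CommSemiring α] [TopologicalSpace α] (a y : α) (n : ℕ) :
    HasSum (fun k => a ^ (n - k) * y ^ k * n.choose k) ((a + y) ^ n) := by
  have hsum : (a + y) ^ n = ∑ k ∈ Finset.range (n + 1), a ^ (n - k) * y ^ k * n.choose k := by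
    rw [add_comm, add_pow]
    exact Finset.sum_congr rfl fun k _ => by rw [mul_comm (y ^ k)]
  rw [hsum]
  refine hasSum_sum_of_ne_finset_zero fun k (hk : k ∉ Finset.range (n + 1)) => ?_
  have hnk : n < k := by simpa [Nat.succ_le_iff] using hk
  rw [Nat.choose_eq_zero_of_lt hnk, Nat.cast_zero, mul_zero]

/-- The coefficients of the power series `∑ c n * x ^ n` re-expanded around the point `a`. -/
noncomputable def recenter (c : ℕ → ℝ) (a : ℝ) (k : ℕ) : ℝ :=
  ∑' n, c n * (a ^ (n - k) * n.choose k)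

lemma summable_binomial_iff (hc : ∀ n, 0 ≤ c n) (ha : 0 ≤ a) {y : ℝ} (hy : 0 ≤ y) :
    (Summable fun p : ℕ × ℕ => c p.1 * (a ^ (p.1 - p.2) * y ^ p.2 * p.1.choose p.2)) ↔
      Summable fun n => c n * (a + y) ^ n := by
  have hrow (n : ℕ) := (hasSum_choose_mul_pow a y n).mul_left (c n)
  rw [summable_prod_of_nonneg fun p => mul_nonneg (hc _) (by positivity)]
  simp only [fun n => (hrow n).tsum_eq, fun n => (hrow n).summable, implies_true, true_and]

lemma hasSum_recenter (hc : ∀ n, 0 ≤ c n) (ha : 0 ≤ a) {y : ℝ} (hy : 0 < y)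
    (hs : Summable fun n => c n * (a + y) ^ n) (k : ℕ) :
    HasSum (fun n => c n * (a ^ (n - k) * n.choose k)) (recenter c a k) := by
  refine Summable.hasSum ?_
  have hcol := ((summable_binomial_iff hc ha hy.le).2 hs).prod_symm.prod_factor k
  refine (summable_mul_right_iff (pow_pos hy k).ne').1 (hcol.congr fun n => ?_)
  simp only [Prod.fst_swap, Prod.snd_swap]
  ring

lemma hasSum_recenter_powerSum (hc : ∀ n, 0 ≤ c n) (ha : 0 ≤ a) {y : ℝ} (hy : 0 < y)
    (hs : Summable fun n => c n * (a + y) ^ n) {z : ℂ} (hz : ‖z‖ ≤ y) :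
    HasSum (fun k => (recenter c a k : ℂ) * z ^ k) (powerSum c (a + z)) := by
  set T : ℕ × ℕ → ℂ := fun p => (c p.1 : ℂ) * ((a : ℂ) ^ (p.1 - p.2) * z ^ p.2 * p.1.choose p.2)
    with hT
  have hsz : Summable fun n => c n * (a + ‖z‖) ^ n :=
    summable_mul_pow_of_le hc (by positivity) (by gcongr) hs
  have hsum : Summable T := .of_norm (by
    simpa [hT, abs_of_nonneg, hc _, ha] using (summable_binomial_iff hc ha (norm_nonneg z)).2 hsz)
  have hrows := hsum.hasSum.prod_fiberwise fun n =>
    (hasSum_choose_mul_pow (a : ℂ) z n).mul_left (c n : ℂ)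
  rw [powerSum, hrows.tsum_eq]
  refine ((Equiv.prodComm ℕ ℕ).hasSum_iff.2 hsum.hasSum).prod_fiberwise fun k => ?_
  have hcol := Complex.hasSum_ofReal.2 (hasSum_recenter hc ha hy hs k)
  refine (hcol.mul_right (z ^ k)).congr_fun fun n => ?_
  simp only [hT, Function.comp_apply, Equiv.prodComm_apply, Prod.swap_prod_mk]
  push_cast
  ring

lemma summable_of_summable_recenter (hc : ∀ n, 0 ≤ c n) (ha : 0 ≤ a) {y : ℝ} (hy : 0 < y)
    (hs : Summable fun n => c n * (a + y) ^ n) {y' : ℝ} (hy' : 0 ≤ y')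
    (hs' : Summable fun k => recenter c a k * y' ^ k) :
    Summable fun n => c n * (a + y') ^ n := by
  rw [← summable_binomial_iff hc ha hy', ← (Equiv.prodComm ℕ ℕ).summable_iff]
  have hcol (k : ℕ) := (hasSum_recenter hc ha hy hs k).mul_right (y' ^ k)
  have hterm (n k : ℕ) : c n * (a ^ (n - k) * n.choose k) * y' ^ k =
      c n * (a ^ (n - k) * y' ^ k * n.choose k) := by ring
  refine (summable_prod_of_nonneg fun p => mul_nonneg (hc _) (by positivity)).2 ⟨fun k => ?_, ?_⟩
  · exact (hcol k).summable.congr fun n => hterm n k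
  · exact hs'.congr fun k => (hcol k).tsum_eq.symm.trans (tsum_congr fun n => hterm n k)

lemma hasSum_of_differentiableOn_ball {p : FormalMultilinearSeries ℂ ℂ ℂ} {G : ℂ → ℂ} {z₀ z : ℂ}
    {ρ : ℝ} (hp : HasFPowerSeriesAt G p z₀) (hG : DifferentiableOn ℂ G (ball z₀ ρ))
    (hz : z₀ + z ∈ ball z₀ ρ) : HasSum (fun n => p.coeff n * z ^ n) (G (z₀ + z)) := by
  obtain ⟨r, hzr, hrρ⟩ := exists_between (mem_ball.1 hz)
  lift r to NNReal using dist_nonneg.trans hzr.le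
  have hcauchy := (hG.mono (closedBall_subset_ball hrρ)).hasFPowerSeriesOnBall
    (by exact_mod_cast dist_nonneg.trans_lt hzr)
  rw [hp.eq_formalMultilinearSeries hcauchy.hasFPowerSeriesAt]
  have hzball : z ∈ eball 0 r := by simpa [← NNReal.coe_lt_coe] using hzr
  simpa [mul_comm] using hcauchy.hasSum hzball

/-- **Pringsheim's theorem**. -/
theorem exists_summable_of_analyticAt (hc : ∀ n, 0 ≤ c n) (hR : 0 < R)
    (hsum : ∀ x, 0 ≤ x → x < R → Summable fun n => c n * x ^ n) {G : ℂ → ℂ}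
    (hG : AnalyticAt ℂ G R) (heq : ∃ᶠ a : ℝ in 𝓝[<] R, G =ᶠ[𝓝 (a : ℂ)] powerSum c) :
    ∃ R' > R, Summable fun n => c n * R' ^ n := by
  obtain ⟨δ, hδ, hball⟩ := Metric.eventually_nhds_iff_ball.1 hG.eventually_analyticAt
  obtain ⟨a, hGa, ha, haR⟩ :=
    (heq.and_eventually (Ioo_mem_nhdsLT (max_lt hR (sub_lt_self R (half_pos hδ))))).exists
  obtain ⟨ha0, haδ⟩ := max_lt_iff.1 ha
  obtain ⟨y, hay, hyR⟩ := exists_between haR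
  have hsy : Summable fun n => c n * (a + (y - a)) ^ n := by
    simpa using hsum y (ha0.trans hay).le hyR
  have hseries : HasFPowerSeriesAt G
      (FormalMultilinearSeries.ofScalars ℂ fun k => (recenter c a k : ℂ)) a := by
    rw [hasFPowerSeriesAt_iff]
    have hGa' : ∀ᶠ z in 𝓝 (0 : ℂ), G (a + z) = powerSum c (a + z) :=
      ((continuous_const_add (a : ℂ)).tendsto' 0 a (add_zero _)).eventually hGa
    filter_upwards [hGa', closedBall_mem_nhds 0 (sub_pos.2 hay)] with z hz hzy
    simpa [hz, mul_comm] using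
      hasSum_recenter_powerSum hc ha0.le (sub_pos.2 hay) hsy (mem_closedBall_zero_iff.1 hzy)
  obtain ⟨R', hRR', hR'⟩ := exists_between (show R < a + δ / 2 by linarith)
  have hRa : dist (R : ℂ) a < δ / 2 := by
    rw [Complex.dist_eq, ← Complex.ofReal_sub, Complex.norm_real, Real.norm_of_nonneg] <;> linarith
  have hGd : DifferentiableOn ℂ G (ball (a : ℂ) (δ / 2)) := fun z hz =>
    (hball z (ball_subset_ball' (by rw [dist_comm]; linarith) hz)).differentiableAt
      |>.differentiableWithinAt
  have hmem : (a : ℂ) + ((R' - a : ℝ) : ℂ) ∈ ball (a : ℂ) (δ / 2) := by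
    rw [mem_ball, dist_self_add_left, Complex.norm_real, Real.norm_of_nonneg] <;> linarith
  have hsumG : Summable fun k => recenter c a k * (R' - a) ^ k := by
    have h := (hasSum_of_differentiableOn_ball hseries hGd hmem).summable
    simp only [FormalMultilinearSeries.coeff_ofScalars] at h
    exact_mod_cast h
  refine ⟨R', hRR', ?_⟩
  simpa using
    summable_of_summable_recenter hc ha0.le (sub_pos.2 hay) hsy (y' := R' - a) (by linarith) hsumG

lemma exists_singularity_of_not_summable (hc : ∀ n, 0 ≤ c n) {r x : ℝ} (hr : 0 < r)
    (hsr : Summable fun n => c n * r ^ n) (hx : 0 ≤ x) (hsx : ¬ Summable fun n => c n * x ^ n) :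
    ∃ R > 0, R ≤ x ∧ (∀ y, 0 ≤ y → y < R → Summable fun n => c n * y ^ n) ∧
      ∀ G : ℂ → ℂ, AnalyticAt ℂ G R → ¬ ∃ᶠ a : ℝ in 𝓝[<] R, G =ᶠ[𝓝 (a : ℂ)] powerSum c := by
  set S : Set ℝ := {y | 0 ≤ y ∧ Summable fun n => c n * y ^ n}
  have hSx : ∀ y ∈ S, y ≤ x := fun y hy => le_of_not_ge fun hxy =>
    hsx (summable_mul_pow_of_le hc hx hxy hy.2)
  have hS : IsLUB S (sSup S) := isLUB_csSup ⟨r, hr.le, hsr⟩ ⟨x, hSx⟩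
  have hR : 0 < sSup S := hr.trans_le (hS.1 ⟨hr.le, hsr⟩)
  have hsum : ∀ y, 0 ≤ y → y < sSup S → Summable fun n => c n * y ^ n := fun y hy hyR => by
    obtain ⟨z, hz, hyz, -⟩ := hS.exists_between hyR
    exact summable_mul_pow_of_le hc hy hyz.le hz.2
  refine ⟨sSup S, hR, hS.2 hSx, hsum, fun G hG heq => ?_⟩
  obtain ⟨R', hR', hsR'⟩ := exists_summable_of_analyticAt hc hR hsum hG heq
  exact hR'.not_ge (hS.1 ⟨(hR.trans hR').le, hsR'⟩)

end PowerSeries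

/-! ### Slit disks and slit annuli -/

lemma isSimplyConnected_image_of_subset_source {α β : Type*} [TopologicalSpace α]
    [TopologicalSpace β] (e : OpenPartialHomeomorph α β) {S : Set α} (hS : IsSimplyConnected S)
    (hsub : S ⊆ e.source) : IsSimplyConnected (e '' S) :=
  have := hS.simplyConnectedSpace
  (e.homeomorphOfImageSubsetSource hsub rfl).symm.toHomotopyEquiv.simplyConnectedSpace

section SlitDisk

variable {a b x ε : ℝ}

/-- The annulus `a < ‖w‖ < b` slit along the positive real axis. -/
def slitAnnulus (a b : ℝ) : Set ℂ := {w | ‖w‖ ∈ Ioo a b ∧ -w ∈ Complex.slitPlane}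

lemma isOpen_slitAnnulus : IsOpen (slitAnnulus a b) :=
  (isOpen_Ioo.preimage continuous_norm).inter (Complex.isOpen_slitPlane.preimage continuous_neg)

lemma exp_image_reProdIm (ha : 0 < a) (hb : 0 < b) :
    Complex.exp '' (Ioo (Real.log a) (Real.log b) ×ℂ Ioo (-Real.pi) Real.pi) =
      {w | ‖w‖ ∈ Ioo a b ∧ w ∈ Complex.slitPlane} := by
  ext w
  constructor
  · rintro ⟨z, ⟨hre, him⟩, rfl⟩
    refine ⟨?_, Complex.mem_slitPlane_iff_arg.2 ⟨?_, Complex.exp_ne_zero z⟩⟩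
    · rw [Complex.norm_exp]
      exact ⟨(Real.log_lt_iff_lt_exp ha).1 hre.1, (Real.lt_log_iff_exp_lt hb).1 hre.2⟩
    · rw [← Complex.log_im, Complex.log_exp him.1 him.2.le]
      exact him.2.ne
  · rintro ⟨hnorm, hw⟩
    refine ⟨Complex.log w, ⟨?_, ?_⟩, Complex.exp_log (Complex.slitPlane_ne_zero hw)⟩
    · rw [mem_preimage, Complex.log_re]
      exact ⟨Real.log_lt_log ha hnorm.1, Real.log_lt_log (ha.trans hnorm.1) hnorm.2⟩
    · rw [mem_preimage, Complex.log_im]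
      exact ⟨Complex.neg_pi_lt_arg w,
        (Complex.arg_le_pi w).lt_of_ne (Complex.mem_slitPlane_iff_arg.1 hw).1⟩

lemma isSimplyConnected_slitAnnulus (ha : 0 < a) (hab : a < b) :
    IsSimplyConnected (slitAnnulus a b) := by
  set L := Ioo (Real.log a) (Real.log b) ×ℂ Ioo (-Real.pi) Real.pi
  have hconvex : Convex ℝ L := ((convex_Ioo _ _).linear_preimage Complex.reLm).inter
    ((convex_Ioo _ _).linear_preimage Complex.imLm)
  have hne : L.Nonempty := by
    obtain ⟨y, hy⟩ := nonempty_Ioo.2 (Real.log_lt_log ha hab)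
    exact ⟨y, hy, by simp [Real.pi_pos]⟩
  have := hconvex.contractibleSpace hne
  have himage := isSimplyConnected_image_of_subset_source Complex.expOpenPartialHomeomorph
    (S := L) (SimplyConnectedSpace.ofContractible L) fun z hz => hz.2
  have heq : slitAnnulus a b = Homeomorph.neg ℂ ⁻¹' (Complex.expOpenPartialHomeomorph '' L) := by
    change _ = Neg.neg ⁻¹' (Complex.exp '' L)
    rw [exp_image_reProdIm ha (ha.trans hab)]
    simp [slitAnnulus]
  rwa [heq, Homeomorph.isSimplyConnected_preimage]

lemma mem_ofReal_image_Icc_iff (hx : 0 < x) {y : ℝ} {w : ℂ} :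
    w ∈ Complex.ofReal '' Icc x y ↔ -w ∉ Complex.slitPlane ∧ ‖w‖ ∈ Icc x y := by
  have hslit : -w ∉ Complex.slitPlane ↔ 0 ≤ w.re ∧ w.im = 0 := by
    simp [Complex.mem_slitPlane_iff]
  rw [hslit]
  constructor
  · rintro ⟨t, ht, rfl⟩
    have ht0 : 0 ≤ t := hx.le.trans ht.1
    simpa [abs_of_nonneg ht0, ht0] using ht
  · rintro ⟨⟨hre, him⟩, hnorm⟩
    have hw : (w.re : ℂ) = w := Complex.ext rfl him.symm
    refine ⟨w.re, ?_, hw⟩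
    rwa [← hw, Complex.norm_real, Real.norm_of_nonneg hre] at hnorm

lemma slitDisk_eq_union (hx : 0 < x) (hε : 0 < ε) :
    slitDisk x ε = ball 0 x ∪ slitAnnulus (x - ε) (x + ε) := by
  ext w
  simp only [slitDisk, slitAnnulus, Set.mem_sdiff, mem_ofReal_image_Icc_iff hx, mem_union,
    mem_ball_zero_iff, mem_ofPred_eq, mem_Icc, mem_Ioo]
  have := lt_or_ge ‖w‖ x
  grind

lemma isConnected_ball_inter_slitAnnulus (hε : 0 < ε) (hεx : ε < x) :
    IsConnected (ball 0 x ∩ slitAnnulus (x - ε) (x + ε)) := by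
  have hinter : ball 0 x ∩ slitAnnulus (x - ε) (x + ε) = slitAnnulus (x - ε) x := by
    ext w
    simp only [slitAnnulus, mem_inter_iff, mem_ball_zero_iff, mem_ofPred_eq, mem_Ioo]
    grind
  rw [hinter]
  exact (isSimplyConnected_slitAnnulus (sub_pos.2 hεx) (by linarith)).isPathConnected.isConnected

lemma ball_subset_slitDisk (hx : 0 < x) (hε : 0 < ε) : ball 0 x ⊆ slitDisk x ε :=
  slitDisk_eq_union hx hε ▸ subset_union_left

lemma ofReal_notMem_slitDisk (hε : 0 < ε) : (x : ℂ) ∉ slitDisk x ε := fun h =>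
  h.2 ⟨x, ⟨le_rfl, by linarith⟩, rfl⟩

lemma isOpen_slitDisk : IsOpen (slitDisk x ε) :=
  isOpen_ball.sdiff (isCompact_Icc.image Complex.continuous_ofReal).isClosed

lemma isPreconnected_slitDisk (hε : 0 < ε) (hεx : ε < x) : IsPreconnected (slitDisk x ε) := by
  obtain ⟨w, hw⟩ := (isConnected_ball_inter_slitAnnulus hε hεx).nonempty
  rw [slitDisk_eq_union (hε.trans hεx) hε]
  exact (convex_ball 0 x).isPreconnected.union w hw.1 hw.2 (isSimplyConnected_slitAnnulus
    (sub_pos.2 hεx) (by linarith)).isPathConnected.isConnected.isPreconnected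

end SlitDisk

namespace RationalMap

/-! ### Rational maps as branched coverings -/

section Covering

variable {f : RationalMap} {s : ℂ}

lemma num_eval_ne_zero (hs : f.den.eval s = 0) : f.num.eval s ≠ 0 := by
  intro hn
  exact (f.coprime.map (Polynomial.evalRingHom s)).ne_zero_or_ne_zero.elim (· hn) (· hs)

lemma eval_eq_coe_iff {w : ℂ} :
    f.eval s = (w : OnePoint ℂ) ↔ f.den.eval s ≠ 0 ∧ f.toFun s = w := by
  by_cases h : f.den.eval s = 0 <;> simp [eval, h, OnePoint.infty_ne_coe]

lemma degree_den_lt_degree_num (hf : f.evalInf = OnePoint.infty) : f.den.degree < f.num.degree := by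
  by_contra h
  simp [evalInf, h, OnePoint.coe_ne_infty] at hf

lemma toFun_mul_den (hs : f.den.eval s ≠ 0) : f.toFun s * f.den.eval s = f.num.eval s :=
  div_mul_cancel₀ _ hs

/-- The set of points of `ℂ` which are not poles of `f` and are mapped into `U`. -/
def preimage (f : RationalMap) (U : Set ℂ) : Set ℂ := {s | f.den.eval s ≠ 0 ∧ f.toFun s ∈ U}

lemma isOpen_den_ne_zero : IsOpen {s : ℂ | f.den.eval s ≠ 0} :=
  isOpen_ne_fun f.den.continuous continuous_const

lemma hasStrictDerivAt_toFun (hs : f.den.eval s ≠ 0) :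
    HasStrictDerivAt f.toFun
      ((f.num.derivative * f.den - f.num * f.den.derivative).eval s / f.den.eval s ^ 2) s := by
  simp only [eval_sub, eval_mul]
  exact (f.num.hasStrictDerivAt s).fun_div (f.den.hasStrictDerivAt s) hs

lemma deriv_toFun_eq_zero_iff (hs : f.den.eval s ≠ 0) :
    deriv f.toFun s = 0 ↔ (f.num.derivative * f.den - f.num * f.den.derivative).eval s = 0 := by
  simp [(hasStrictDerivAt_toFun hs).hasDerivAt.deriv, hs]

lemma differentiableOn_toFun : DifferentiableOn ℂ f.toFun {s | f.den.eval s ≠ 0} := fun _ hs =>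
  (hasStrictDerivAt_toFun hs).hasDerivAt.differentiableAt.differentiableWithinAt

lemma analyticAt_toFun (hs : f.den.eval s ≠ 0) : AnalyticAt ℂ f.toFun s :=
  differentiableOn_toFun.analyticAt (isOpen_den_ne_zero.mem_nhds hs)

lemma isOpen_preimage {U : Set ℂ} (hU : IsOpen U) : IsOpen (f.preimage U) :=
  differentiableOn_toFun.continuousOn.isOpen_inter_preimage isOpen_den_ne_zero hU

lemma wronskian_ne_zero (hf : f.evalInf = OnePoint.infty) :
    f.num.derivative * f.den - f.num * f.den.derivative ≠ 0 := by
  intro h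
  have hw : f.den.wronskian f.num = 0 := by rw [Polynomial.wronskian, ← h]; ring
  have hnum : f.num.natDegree = 0 :=
    Polynomial.derivative_eq_zero.1 (f.coprime.symm.wronskian_eq_zero_iff.1 hw).2
  have hlt := Polynomial.natDegree_lt_natDegree f.den_ne_zero (degree_den_lt_degree_num hf)
  lia

lemma tendsto_toFun_cobounded_of_inv {l : Filter ℂ} (hl : l ≤ cofinite) (hnum : f.num ≠ 0)
    (h : Tendsto (fun s => f.den.eval s / f.num.eval s) l (𝓝 0)) :
    Tendsto f.toFun l (Bornology.cobounded ℂ) := by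
  have hne {p : Polynomial ℂ} (hp : p ≠ 0) : ∀ᶠ s in l, p.eval s ≠ 0 :=
    hl (Polynomial.finite_setOfPred_isRoot hp).compl_mem_cofinite
  have hinv : Tendsto (fun s => f.den.eval s / f.num.eval s) l (𝓝[≠] 0) :=
    tendsto_nhdsWithin_iff.2
      ⟨h, ((hne f.den_ne_zero).and (hne hnum)).mono fun s hs => div_ne_zero hs.1 hs.2⟩
  exact (tendsto_inv₀_nhdsNE_zero.comp hinv).congr fun s => inv_div _ _

lemma tendsto_toFun_cobounded (hf : f.evalInf = OnePoint.infty) :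
    Tendsto f.toFun (Bornology.cobounded ℂ) (Bornology.cobounded ℂ) :=
  have hdeg := degree_den_lt_degree_num hf
  tendsto_toFun_cobounded_of_inv (Bornology.le_cofinite ℂ) (ne_zero_of_degree_gt hdeg)
    (isLittleO_cobounded_of_degree_lt hdeg).tendsto_div_nhds_zero

lemma tendsto_toFun_nhdsNE_of_pole (hs : f.den.eval s = 0) :
    Tendsto f.toFun (𝓝[≠] s) (Bornology.cobounded ℂ) := by
  have hnum := num_eval_ne_zero hs
  have hquot : ContinuousAt (fun t => f.den.eval t / f.num.eval t) s :=
    f.den.continuous.continuousAt.div f.num.continuous.continuousAt hnum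
  refine tendsto_toFun_cobounded_of_inv (nhdsNE_le_cofinite s)
    (fun h0 => hnum (by rw [h0, eval_zero])) (Tendsto.mono_left ?_ nhdsWithin_le_nhds)
  simpa [hs] using hquot.tendsto

lemma finite_preimage_singleton (hf : f.evalInf = OnePoint.infty) (w : ℂ) :
    (f.preimage {w}).Finite := by
  have hp : f.num - Polynomial.C w * f.den ≠ 0 := by
    rw [sub_ne_zero, ← smul_eq_C_mul]
    intro h
    exact (degree_smul_le w f.den).not_gt (h ▸ degree_den_lt_degree_num hf)
  refine (Polynomial.finite_setOfPred_isRoot hp).subset ?_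
  rintro s ⟨hs, rfl⟩
  simp [Polynomial.IsRoot, toFun_mul_den hs]

lemma isCompact_preimage (hf : f.evalInf = OnePoint.infty) {K : Set ℂ} (hK : IsCompact K) :
    IsCompact (f.preimage K) := by
  have : CompactSpace K := isCompact_iff_compactSpace.1 hK
  -- Clearing the denominator exhibits the preimage as a projection along the compact `K`.
  have hproj : f.preimage K =
      Prod.snd '' {p : K × ℂ | f.num.eval p.2 = (p.1 : ℂ) * f.den.eval p.2} := by
    ext s
    constructor
    · rintro ⟨hs, hsK⟩
      exact ⟨(⟨_, hsK⟩, s), (toFun_mul_den hs).symm, rfl⟩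
    · rintro ⟨⟨w, s⟩, h : f.num.eval s = w * f.den.eval s, rfl⟩
      have hs : f.den.eval s ≠ 0 := fun h0 => num_eval_ne_zero h0 (by rw [h, h0, mul_zero])
      exact ⟨hs, by rw [toFun, h, mul_div_cancel_right₀ _ hs]; exact w.2⟩
  refine isCompact_of_isClosed_isBounded ?_ ?_
  · rw [hproj]
    exact isClosedMap_snd_of_compactSpace _
      (isClosed_eq (f.num.continuous.comp continuous_snd) (by fun_prop))
  · have hfar : ∀ᶠ s in Bornology.cobounded ℂ, f.toFun s ∉ K :=
      (tendsto_toFun_cobounded hf).eventually hK.isBounded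
    exact Bornology.isBounded_def.2 (hfar.mono fun s hs hsK => hs hsK.2)

lemma nhds_toFun_le_map (hf : f.evalInf = OnePoint.infty) (hs : f.den.eval s ≠ 0) :
    𝓝 (f.toFun s) ≤ Filter.map f.toFun (𝓝 s) := by
  refine (analyticAt_toFun hs).eventually_constant_or_nhds_le_map_nhds.resolve_left fun h => ?_
  exact infinite_of_mem_nhds s (inter_mem (isOpen_den_ne_zero.mem_nhds hs) h)
    (finite_preimage_singleton hf (f.toFun s))

lemma image_mem_nhds (hf : f.evalInf = OnePoint.infty) (hs : f.den.eval s ≠ 0) {U : Set ℂ}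
    (hU : U ∈ 𝓝 s) : f.toFun '' U ∈ 𝓝 (f.toFun s) :=
  nhds_toFun_le_map hf hs (image_mem_map hU)

/-- The restriction of a rational map to the complement of its poles, on which it is continuous. -/
noncomputable def restrict (f : RationalMap) (s : {s : ℂ // f.den.eval s ≠ 0}) : ℂ := f.toFun s

lemma continuous_restrict : Continuous f.restrict :=
  differentiableOn_toFun.continuousOn.domRestrict

lemma isClosedMap_restrict (hf : f.evalInf = OnePoint.infty) : IsClosedMap f.restrict := by
  refine (isProperMap_iff_isCompact_preimage.2 ⟨continuous_restrict, fun K hK => ?_⟩).isClosedMap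
  rw [Subtype.isCompact_iff]
  convert isCompact_preimage hf hK using 1
  ext s
  simp [preimage, restrict, and_comm]

lemma exists_mem_closure_of_mem_closure_image (hf : f.evalInf = OnePoint.infty) {A : Set ℂ}
    (hA : ∀ s ∈ A, f.den.eval s ≠ 0) {w : ℂ} (hw : w ∈ closure (f.toFun '' A)) :
    ∃ t ∈ closure A, f.den.eval t ≠ 0 ∧ f.toFun t = w := by
  have himage : f.toFun '' A = f.restrict '' (Subtype.val ⁻¹' A) := by
    ext
    simp only [mem_image, mem_preimage, restrict, Subtype.exists]
    grind
  rw [himage] at hw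
  obtain ⟨t, ht, rfl⟩ := (isClosedMap_restrict hf).closure_image_subset _ hw
  exact ⟨t, continuous_subtype_val.closure_preimage_subset A ht, t.2, rfl⟩

lemma isCoveringMapOn_restrict (hf : f.evalInf = OnePoint.infty) :
    IsCoveringMapOn f.restrict {w | ∀ s ∈ f.preimage {w}, deriv f.toFun s ≠ 0} := by
  refine (isClosedMap_restrict hf).isCoveringMapOn_of_isLocalHomeomorphOn (fun w _ => ?_) ?_
  · refine Set.Finite.of_finite_image (f := Subtype.val)
      ((finite_preimage_singleton hf w).subset ?_) Subtype.val_injective.injOn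
    rintro _ ⟨s, hs, rfl⟩
    exact ⟨s.2, hs⟩
  · have hlocal : IsLocalHomeomorphOn f.toFun {s | f.den.eval s ≠ 0 ∧ deriv f.toFun s ≠ 0} :=
      IsLocalHomeomorphOn.mk _ _ fun s hs =>
        ⟨((analyticAt_toFun hs.1).hasStrictDerivAt.hasStrictFDerivAt_equiv
          hs.2).toOpenPartialHomeomorph _, HasStrictFDerivAt.mem_toOpenPartialHomeomorph_source _,
          fun _ _ => rfl⟩
    exact hlocal.comp (isOpen_den_ne_zero.isOpenEmbedding_subtypeVal.isLocalHomeomorph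
      |>.isLocalHomeomorphOn) fun s hs => ⟨s.2, hs s ⟨s.2, rfl⟩⟩

end Covering

/-! ### Sheets and analytic continuation -/

section Sheet

variable {f X Y : RationalMap} {U W A : Set ℂ} {s t : ℂ} {G : ℂ → ℂ}

/-- The sheet of `f` over `U` through `s`, that is, the connected component of `s` in the preimage
of `U`. -/
def sheet (f : RationalMap) (U : Set ℂ) (s : ℂ) : Set ℂ := connectedComponentIn (f.preimage U) s

lemma sheet_subset_preimage : f.sheet U s ⊆ f.preimage U := connectedComponentIn_subset _ _

lemma isOpen_sheet (hU : IsOpen U) : IsOpen (f.sheet U s) :=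
  (isOpen_preimage hU).connectedComponentIn

lemma isPreconnected_sheet : IsPreconnected (f.sheet U s) := isPreconnected_connectedComponentIn

lemma self_mem_sheet (hs : s ∈ f.preimage U) : s ∈ f.sheet U s := mem_connectedComponentIn hs

lemma sheet_mono (h : U ⊆ W) : f.sheet U s ⊆ f.sheet W s :=
  connectedComponentIn_mono s fun _ ht => ⟨ht.1, h ht.2⟩

lemma subset_sheet_of_isPreconnected (hA : IsPreconnected A) (hsub : A ⊆ f.preimage U)
    (hne : (A ∩ f.sheet U s).Nonempty) : A ⊆ f.sheet U s := by
  obtain ⟨t, htA, ht⟩ := hne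
  unfold sheet at ht ⊢
  rw [connectedComponentIn_eq ht]
  exact hA.subset_connectedComponentIn htA hsub

lemma mem_sheet_of_mem_closure (hs : s ∈ f.preimage U) (ht : t ∈ closure (f.sheet U s))
    (htU : t ∈ f.preimage U) : t ∈ f.sheet U s :=
  subset_sheet_of_isPreconnected
    (isPreconnected_sheet.subset_closure (subset_insert t _) (insert_subset ht subset_closure))
    (insert_subset htU sheet_subset_preimage)
    ⟨s, mem_insert_of_mem _ (self_mem_sheet hs), self_mem_sheet hs⟩ (mem_insert _ _)

lemma image_sheet (hf : f.evalInf = OnePoint.infty) (hU : IsOpen U) (hUc : IsPreconnected U)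
    (hs : s ∈ f.preimage U) : f.toFun '' f.sheet U s = U := by
  refine (image_subset_iff.2 fun t ht => (sheet_subset_preimage ht).2).antisymm ?_
  have hopen : IsOpen (f.toFun '' f.sheet U s) := isOpen_iff_mem_nhds.2 <| by
    rintro _ ⟨t, ht, rfl⟩
    exact image_mem_nhds hf (sheet_subset_preimage ht).1 ((isOpen_sheet hU).mem_nhds ht)
  refine hUc.subset_of_closure_inter_subset hopen ⟨_, hs.2, s, self_mem_sheet hs, rfl⟩ ?_
  rintro w ⟨hw, hwU⟩
  obtain ⟨t, ht, htden, rfl⟩ :=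
    exists_mem_closure_of_mem_closure_image hf (fun t ht => (sheet_subset_preimage ht).1) hw
  exact ⟨t, mem_sheet_of_mem_closure hs ht ⟨htden, hwU⟩, rfl⟩

lemma toFun_eq_comp_of_mem_sheet (hU : IsOpen U) (hG : DifferentiableOn ℂ G U)
    (hs : s ∈ X.preimage U)
    (hloc : ∀ᶠ t in 𝓝 s, Y.den.eval t ≠ 0 ∧ Y.toFun t = G (X.toFun t)) (ht : t ∈ X.sheet U s) :
    Y.den.eval t ≠ 0 ∧ Y.toFun t = G (X.toFun t) := by
  have hnum : AnalyticOnNhd ℂ (fun t => Y.num.eval t) (X.sheet U s) := fun t _ =>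
    Y.num.differentiable.analyticAt t
  have hden : AnalyticOnNhd ℂ (fun t => G (X.toFun t) * Y.den.eval t) (X.sheet U s) :=
    fun t ht => ((hG.analyticAt (hU.mem_nhds (sheet_subset_preimage ht).2)).comp
      (analyticAt_toFun (sheet_subset_preimage ht).1)).mul (Y.den.differentiable.analyticAt t)
  -- Comparing numerators also covers the points which could a priori be poles of `Y`.
  have heq : Y.num.eval t = G (X.toFun t) * Y.den.eval t :=
    hnum.eqOn_of_preconnected_of_eventuallyEq hden isPreconnected_sheet (self_mem_sheet hs)
      (hloc.mono fun t ht => by simp only [← ht.2, toFun_mul_den ht.1]) ht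
  have hYt : Y.den.eval t ≠ 0 := fun h0 => num_eval_ne_zero h0 (by rw [heq, h0, mul_zero])
  exact ⟨hYt, by rw [toFun, heq, mul_div_cancel_right₀ _ hYt]⟩

/-- `s ↦ (X s, Y s)` is injective up to finitely many points. -/
def GenericallyInjective (X Y : RationalMap) : Prop :=
  {s : ℂ | ∃ t, t ≠ s ∧ X.eval t = X.eval s ∧ Y.eval t = Y.eval s}.Finite

lemma GenericallyInjective.injOn (h : GenericallyInjective X Y) (hX : X.evalInf = OnePoint.infty)
    (hA : IsOpen A) (hXA : ∀ t ∈ A, X.den.eval t ≠ 0)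
    (hYA : ∀ t ∈ A, Y.den.eval t ≠ 0 ∧ Y.toFun t = G (X.toFun t)) : InjOn X.toFun A := by
  intro s hs s' hs' heq
  by_contra hne
  obtain ⟨B, B', hB, hB', hsB, hsB', hdisj⟩ := t2_separation hne
  have hnear : X.toFun ⁻¹' (X.toFun '' (A ∩ B')) ∈ 𝓝 s :=
    (analyticAt_toFun (hXA s hs)).continuousAt <| heq ▸
      image_mem_nhds hX (hXA s' hs') ((hA.inter hB').mem_nhds ⟨hs', hsB'⟩)
  refine infinite_of_mem_nhds s (inter_mem ((hA.inter hB).mem_nhds ⟨hs, hsB⟩) hnear) (h.subset ?_)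
  rintro t ⟨⟨htA, htB⟩, t', ⟨htA', htB'⟩, hX'⟩
  refine ⟨t', fun ht => hdisj.le_bot ⟨htB, ht ▸ htB'⟩, ?_, ?_⟩
  · simp only [eval, hXA t htA, hXA t' htA', hX', if_false]
  · simp only [eval, hYA t htA, hYA t' htA', hX', if_false]

lemma genericallyInjective_of_isProper {E : MvPolynomial (Fin 2) ℂ} (hpar : IsParametrization E X Y)
    (hprop : IsProper E X Y) (hX : X.evalInf = OnePoint.infty) : GenericallyInjective X Y := by
  refine (hpar.union (hprop.biUnion fun P _ => finite_preimage_singleton hX P.1)).subset ?_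
  rintro s ⟨t, hts, hXt, hYt⟩
  by_cases hs : X.den.eval s ≠ 0 ∧ Y.den.eval s ≠ 0 ∧ evalE E (X.toFun s) (Y.toFun s) = 0
  · have hXs : X.eval s = (X.toFun s : OnePoint ℂ) := eval_eq_coe_iff.2 ⟨hs.1, rfl⟩
    have hYs : Y.eval s = (Y.toFun s : OnePoint ℂ) := eval_eq_coe_iff.2 ⟨hs.2.1, rfl⟩
    refine .inr (mem_iUnion₂.2 ⟨(X.toFun s, Y.toFun s), ⟨hs.2.2, fun hunique => hts ?_⟩, hs.1, rfl⟩)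
    exact hunique.unique ⟨hXt.trans hXs, hYt.trans hYs⟩ ⟨hXs, hYs⟩
  · exact .inl hs

lemma exists_differentiableOn_section (hf : f.evalInf = OnePoint.infty) (hA : IsOpen A)
    (hAc : IsSimplyConnected A) (hreg : ∀ s ∈ f.preimage A, deriv f.toFun s ≠ 0)
    (hs : s ∈ f.preimage A) :
    ∃ σ : ℂ → ℂ, DifferentiableOn ℂ σ A ∧ (∀ w ∈ A, σ w ∈ f.preimage {w}) ∧
      σ (f.toFun s) = s := by
  have := hAc.simplyConnectedSpace
  have := hA.locallyPathConnectedSpace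
  obtain ⟨F, ⟨hFs, hF⟩, -⟩ := (isCoveringMapOn_restrict hf).existsUnique_continuousMap_lifts
    (⟨Subtype.val, continuous_subtype_val⟩ : C(A, ℂ)) (a₀ := ⟨f.toFun s, hs.2⟩) (e₀ := ⟨s, hs.1⟩)
    rfl fun w t ht => hreg t ⟨ht.1, ht.2 ▸ w.2⟩
  have hsec (w : A) : f.toFun (F w) = w := congrFun hF w
  let σ : ℂ → ℂ := Function.extend Subtype.val (fun w : A => (F w : ℂ)) 0
  have hσ (w : A) : σ w = F w := Subtype.val_injective.extend_apply _ _ _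
  have hcont : ContinuousOn σ A := by
    rw [continuousOn_iff_continuous_domRestrict]
    exact (continuous_subtype_val.comp F.continuous).congr fun w => (hσ w).symm
  have hmem : ∀ w ∈ A, σ w ∈ f.preimage {w} := fun w hw => by
    rw [hσ ⟨w, hw⟩]
    exact ⟨(F _).2, hsec ⟨w, hw⟩⟩
  refine ⟨σ, fun w hw => ?_, hmem, (hσ ⟨_, hs.2⟩).trans (congrArg Subtype.val hFs)⟩
  have hinv : ∀ᶠ v in 𝓝 w, f.toFun (σ v) = v := by
    filter_upwards [hA.mem_nhds hw] with v hv using (hmem v hv).2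
  have hderiv : deriv f.toFun (σ w) ≠ 0 := hreg _ ⟨(hmem w hw).1, (hmem w hw).2.symm ▸ hw⟩
  exact ((analyticAt_toFun (hmem w hw).1).differentiableAt.hasDerivAt.of_local_left_inverse
    (hcont.continuousAt (hA.mem_nhds hw)) hderiv hinv).differentiableAt.differentiableWithinAt

lemma exists_section_mapsTo_sheet (hX : X.evalInf = OnePoint.infty) (hU : IsOpen U)
    (hUc : IsPreconnected U) (hs : s ∈ X.preimage U) (hA : IsOpen A)
    (hAc : IsSimplyConnected A) (hUA : IsConnected (U ∩ A))
    (hreg : ∀ t ∈ X.preimage A, deriv X.toFun t ≠ 0) :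
    ∃ σ : ℂ → ℂ, DifferentiableOn ℂ σ A ∧ (∀ w ∈ A, σ w ∈ X.preimage {w}) ∧
      MapsTo σ (U ∩ A) (X.sheet U s) := by
  obtain ⟨w₀, hw₀⟩ := hUA.nonempty
  obtain ⟨t, ht, rfl⟩ : w₀ ∈ X.toFun '' X.sheet U s := (image_sheet hX hU hUc hs).symm ▸ hw₀.1
  obtain ⟨σ, hσ, hsec, hσt⟩ :=
    exists_differentiableOn_section hX hA hAc hreg ⟨(sheet_subset_preimage ht).1, hw₀.2⟩
  refine ⟨σ, hσ, hsec, mapsTo_iff_image_subset.2 (subset_sheet_of_isPreconnected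
    (hUA.isPreconnected.image σ (hσ.continuousOn.mono inter_subset_right)) ?_
    ⟨t, ⟨_, hw₀, hσt⟩, ht⟩)⟩
  rintro _ ⟨w, hw, rfl⟩
  exact ⟨(hsec w hw.2).1, (hsec w hw.2).2.symm ▸ hw.1⟩

-- Over `A` the continuation is `Y ∘ σ` for a section `σ` of `X`; it agrees with `G` on `U ∩ A`
-- because `σ` takes its values there in the sheet of `s`.
lemma exists_continuation (hX : X.evalInf = OnePoint.infty) (hU : IsOpen U)
    (hUc : IsPreconnected U) (hG : DifferentiableOn ℂ G U) (hs : s ∈ X.preimage U)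
    (hloc : ∀ᶠ t in 𝓝 s, Y.den.eval t ≠ 0 ∧ Y.toFun t = G (X.toFun t)) (hA : IsOpen A)
    (hAc : IsSimplyConnected A) (hUA : IsConnected (U ∩ A))
    (hreg : ∀ t ∈ X.preimage A, ¬ IsCriticalPt X Y t) :
    ∃ G' : ℂ → ℂ, DifferentiableOn ℂ G' (U ∪ A) ∧ EqOn G' G U := by
  obtain ⟨σ, hσ, hsec, hsheet⟩ := exists_section_mapsTo_sheet hX hU hUc hs hA hAc hUA
    fun t ht h0 => hreg t ht (.inl ((deriv_toFun_eq_zero_iff ht.1).1 h0))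
  refine exists_differentiableOn_union (H := Y.toFun ∘ σ) hU hA hG (fun w hw => ?_) fun w hw => ?_
  · have hY : Y.den.eval (σ w) ≠ 0 := fun h0 =>
      hreg (σ w) ⟨(hsec w hw).1, (hsec w hw).2.symm ▸ hw⟩ (.inr h0)
    exact (analyticAt_toFun hY).differentiableAt.comp_differentiableWithinAt w (hσ w hw)
  · rw [Function.comp_apply, (toFun_eq_comp_of_mem_sheet hU hG hs hloc (hsheet hw)).2,
      (hsec w hw.2).2]

lemma bijOn_sheet (hX : X.evalInf = OnePoint.infty) (hinj : X.GenericallyInjective Y)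
    (hU : IsOpen U) (hUc : IsPreconnected U) (hG : DifferentiableOn ℂ G U)
    (hs : s ∈ X.preimage U)
    (hloc : ∀ᶠ t in 𝓝 s, Y.den.eval t ≠ 0 ∧ Y.toFun t = G (X.toFun t)) :
    BijOn X.toFun (X.sheet U s) U :=
  have himage := image_sheet hX hU hUc hs
  ⟨mapsTo_iff_image_subset.2 himage.subset,
    hinj.injOn hX (isOpen_sheet hU) (fun _ ht => (sheet_subset_preimage ht).1)
      fun _ ht => toFun_eq_comp_of_mem_sheet hU hG hs hloc ht, himage.superset⟩

end Sheet

section CriticalPoints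

variable {X Y : RationalMap} {x : ℝ}

lemma finite_setOf_isCriticalPt (hX : X.evalInf = OnePoint.infty) :
    {s : ℂ | IsCriticalPt X Y s}.Finite :=
  (Polynomial.finite_setOfPred_isRoot (wronskian_ne_zero hX)).union
    (Polynomial.finite_setOfPred_isRoot Y.den_ne_zero)

lemma exists_margin (hX : X.evalInf = OnePoint.infty) (hx : 0 < x) :
    ∃ ε ∈ Ioo 0 x, ∀ s, IsCriticalPt X Y s →
      ‖X.toFun s‖ ∈ Ioo (x - ε) (x + ε) → ‖X.toFun s‖ = x := by
  have h : ∀ᶠ ε in 𝓝[>] (0 : ℝ), ∀ s ∈ {s : ℂ | IsCriticalPt X Y s},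
      ‖X.toFun s‖ ∈ Ioo (x - ε) (x + ε) → ‖X.toFun s‖ = x := by
    refine (eventually_all_finite (finite_setOf_isCriticalPt hX)).2 fun s _ => ?_
    by_cases hs : ‖X.toFun s‖ = x
    · exact .of_forall fun _ _ => hs
    · filter_upwards [Ioo_mem_nhdsGT (abs_pos.2 (sub_ne_zero.2 hs))] with ε hε hmem
      exact absurd hε.2 (abs_sub_lt_iff.2 ⟨by linarith [hmem.2], by linarith [hmem.1]⟩).not_gt
  obtain ⟨ε, hmargin, hε⟩ := (h.and (Ioo_mem_nhdsGT hx)).exists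
  exact ⟨ε, hε, hmargin⟩

lemma exists_margin_not_isCriticalPt (hX : X.evalInf = OnePoint.infty) (hx : 0 < x)
    (huniq : ∀ s, IsCriticalPt X Y s → X.den.eval s ≠ 0 → ‖X.toFun s‖ = x → X.toFun s = x) :
    ∃ ε ∈ Ioo 0 x, ∀ s ∈ X.preimage (slitAnnulus (x - ε) (x + ε)), ¬ IsCriticalPt X Y s := by
  obtain ⟨ε, hε, hmargin⟩ := exists_margin (Y := Y) hX hx
  refine ⟨ε, hε, fun s hs hcrit => ?_⟩
  have hslit : -(x : ℂ) ∈ Complex.slitPlane :=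
    huniq s hcrit hs.1 (hmargin s hcrit hs.2.1) ▸ hs.2.2
  rw [← Complex.ofReal_neg, Complex.ofReal_mem_slitPlane] at hslit
  linarith

end CriticalPoints

/-! ### The branch over the positive real axis -/

section RealLine

variable {f X : RationalMap} {sc xc : ℝ}

/-- The restriction of a real rational map to the real line. -/
noncomputable def realFun (f : RationalMap) (s : ℝ) : ℝ := (f.toFun s).re

lemma IsReal.toFun_ofReal (hf : f.IsReal) (s : ℝ) : f.toFun s = f.realFun s := by
  obtain ⟨k, P, Q, hk, hP, hQ⟩ := hf
  have hnum : k * f.num.eval (s : ℂ) = (P.eval s : ℝ) := by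
    rw [← smul_eq_mul, ← Polynomial.eval_smul, hP]
    exact Polynomial.eval_map_apply (algebraMap ℝ ℂ) s
  have hden : k * f.den.eval (s : ℂ) = (Q.eval s : ℝ) := by
    rw [← smul_eq_mul, ← Polynomial.eval_smul, hQ]
    exact Polynomial.eval_map_apply (algebraMap ℝ ℂ) s
  have hreal : f.toFun s = ((P.eval s / Q.eval s : ℝ) : ℂ) := by
    rw [Complex.ofReal_div, ← hnum, ← hden, mul_div_mul_left _ _ hk, toFun]
  rw [realFun, hreal, Complex.ofReal_re]

lemma hasDerivAt_realFun {s : ℝ} (hs : f.den.eval (s : ℂ) ≠ 0) :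
    HasDerivAt f.realFun (deriv f.toFun (s : ℂ)).re s :=
  (analyticAt_toFun hs).differentiableAt.hasDerivAt.real_of_complex

lemma IsReal.deriv_toFun_ofReal (hf : f.IsReal) {s : ℝ} (hs : f.den.eval (s : ℂ) ≠ 0) :
    deriv f.toFun (s : ℂ) = (deriv f.toFun (s : ℂ)).re :=
  (analyticAt_toFun hs).differentiableAt.hasDerivAt.comp_ofReal.unique <|
    (hasDerivAt_realFun hs).ofReal_comp.congr_of_eventuallyEq (.of_forall hf.toFun_ofReal)

lemma IsReal.strictMonoOn_realFun (hf : f.IsReal) {s₀ s₁ : ℝ}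
    (hden : ∀ s ∈ Ico s₀ s₁, f.den.eval (s : ℂ) ≠ 0)
    (hcrit : ∀ s ∈ Ico s₀ s₁, deriv f.toFun (s : ℂ) ≠ 0)
    (hpos : 0 < (deriv f.toFun (s₀ : ℂ)).re) : StrictMonoOn f.realFun (Ico s₀ s₁) := by
  have hcont : ContinuousOn f.realFun (Ico s₀ s₁) := fun s hs =>
    (hasDerivAt_realFun (hden s hs)).continuousAt.continuousWithinAt
  have hderiv : ContinuousOn (fun s : ℝ => (deriv f.toFun (s : ℂ)).re) (Ico s₀ s₁) := fun s hs =>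
    (Complex.continuous_re.continuousAt.comp <| (analyticAt_toFun (hden s hs)).deriv.continuousAt
      |>.comp Complex.continuous_ofReal.continuousAt).continuousWithinAt
  refine strictMonoOn_of_deriv_pos (convex_Ico s₀ s₁) hcont fun s hs => ?_
  replace hs := interior_subset hs
  rw [(hasDerivAt_realFun (hden s hs)).deriv]
  by_contra! hle
  have hsub : Icc s₀ s ⊆ Ico s₀ s₁ := Icc_subset_Ico_right hs.2
  obtain ⟨t, ht, ht0⟩ := intermediate_value_Icc' hs.1 (hderiv.mono hsub) ⟨hle, hpos.le⟩
  exact hcrit t (hsub ht)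
    ((hf.deriv_toFun_ofReal (hden t (hsub ht))).trans (congrArg Complex.ofReal ht0))

lemma tendsto_realFun_nhdsLT (hxc : X.toFun (sc : ℂ) = xc) (hpos : 0 < xc) :
    Tendsto X.realFun (𝓝[<] sc) (𝓝 xc) := by
  have hden : X.den.eval (sc : ℂ) ≠ 0 := fun h0 => by
    rw [toFun, h0, div_zero] at hxc
    exact hpos.ne (mod_cast hxc)
  have hX : X.realFun sc = xc := by rw [realFun, hxc, Complex.ofReal_re]
  exact hX ▸ (hasDerivAt_realFun hden).continuousAt.tendsto.mono_left nhdsWithin_le_nhds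

end RealLine

/-- The pair `(X, Y)` parametrizes, near the real point `s₀`, the germ at `0` of an analytic
function with nonnegative Taylor coefficients `c`, the parametrization being oriented so that `X`
increases at `s₀`. -/
structure IsPositiveBranch (X Y : RationalMap) (c : ℕ → ℝ) (s₀ : ℝ) : Prop where
  isReal : X.IsReal
  coeff_nonneg : ∀ n, 0 ≤ c n
  exists_summable : ∃ r > 0, Summable fun n => c n * r ^ n
  den_ne_zero : X.den.eval (s₀ : ℂ) ≠ 0
  toFun_eq_zero : X.toFun (s₀ : ℂ) = 0
  deriv_pos : 0 < (deriv X.toFun (s₀ : ℂ)).re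
  parametrizes : ∀ᶠ t in 𝓝 (s₀ : ℂ), Y.den.eval t ≠ 0 ∧ Y.toFun t = powerSum c (X.toFun t)

/-- `X` has no pole and `(X, Y)` no critical point on the real interval `[s₀, s₁)`. -/
def IsRegularOn (X Y : RationalMap) (s₀ s₁ : ℝ) : Prop :=
  ∀ s ∈ Ico s₀ s₁, X.den.eval (s : ℂ) ≠ 0 ∧ ¬ IsCriticalPt X Y s

namespace IsPositiveBranch

variable {X Y : RationalMap} {c : ℕ → ℝ} {G : ℂ → ℂ} {s₀ s₁ s R sc xc ε : ℝ}

lemma of_hasSum (hX : X.IsReal) {φ : ℂ → ℂ} {r : ℝ} (hr : 0 < r)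
    (hc : ∀ x : ℂ, ‖x‖ < r → HasSum (fun n : ℕ => (c n : ℂ) * x ^ n) (φ x))
    (hc_nonneg : ∀ n, 0 ≤ c n)
    (hs₀ : X.eval (s₀ : ℂ) = ((0 : ℂ) : OnePoint ℂ) ∧
      ∀ᶠ t in 𝓝 (s₀ : ℂ), Y.eval t = ((φ (X.toFun t) : ℂ) : OnePoint ℂ))
    (hderiv : 0 < (deriv X.toFun (s₀ : ℂ)).re) : IsPositiveBranch X Y c s₀ := by
  obtain ⟨hden, hX₀⟩ := eval_eq_coe_iff.1 hs₀.1
  have hhalf : ‖((r / 2 : ℝ) : ℂ)‖ < r := by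
    rw [Complex.norm_real, Real.norm_of_nonneg (half_pos hr).le]
    exact half_lt_self hr
  refine ⟨hX, hc_nonneg, ⟨r / 2, half_pos hr, mod_cast (hc _ hhalf).summable⟩, hden, hX₀,
    hderiv, ?_⟩
  have hball : ∀ᶠ t in 𝓝 (s₀ : ℂ), X.toFun t ∈ ball 0 r :=
    (analyticAt_toFun hden).continuousAt (isOpen_ball.mem_nhds (hX₀ ▸ mem_ball_self hr))
  filter_upwards [hs₀.2, hball] with t ht htr
  obtain ⟨hYden, hY⟩ := eval_eq_coe_iff.1 ht
  exact ⟨hYden, hY.trans (hc _ (mem_ball_zero_iff.1 htr)).tsum_eq.symm⟩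

lemma realFun_eq_zero (h : IsPositiveBranch X Y c s₀) : X.realFun s₀ = 0 := by
  rw [realFun, h.toFun_eq_zero, Complex.zero_re]

lemma strictMonoOn_realFun (h : IsPositiveBranch X Y c s₀) (hreg : IsRegularOn X Y s₀ s₁) :
    StrictMonoOn X.realFun (Ico s₀ s₁) :=
  h.isReal.strictMonoOn_realFun (fun s hs => (hreg s hs).1)
    (fun s hs h0 => (hreg s hs).2 (.inl ((deriv_toFun_eq_zero_iff (hreg s hs).1).1 h0))) h.deriv_pos

lemma realFun_nonneg (h : IsPositiveBranch X Y c s₀) (hreg : IsRegularOn X Y s₀ s₁)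
    (hs : s ∈ Ico s₀ s₁) : 0 ≤ X.realFun s :=
  h.realFun_eq_zero ▸
    (h.strictMonoOn_realFun hreg).monotoneOn ⟨le_rfl, hs.1.trans_lt hs.2⟩ hs hs.1

lemma norm_toFun_ofReal (h : IsPositiveBranch X Y c s₀) (hreg : IsRegularOn X Y s₀ s₁)
    (hs : s ∈ Ico s₀ s₁) : ‖X.toFun s‖ = X.realFun s := by
  rw [h.isReal.toFun_ofReal, Complex.norm_real, Real.norm_of_nonneg (h.realFun_nonneg hreg hs)]

lemma mem_preimage_ball (h : IsPositiveBranch X Y c s₀) (hR : 0 < R) :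
    (s₀ : ℂ) ∈ X.preimage (ball 0 R) :=
  ⟨h.den_ne_zero, h.toFun_eq_zero ▸ mem_ball_self hR⟩

lemma ofReal_mem_sheet (h : IsPositiveBranch X Y c s₀) (hreg : IsRegularOn X Y s₀ s₁)
    (hs : s ∈ Ico s₀ s₁) (hsR : X.realFun s < R) : (s : ℂ) ∈ X.sheet (ball 0 R) s₀ := by
  have hsub : Icc s₀ s ⊆ Ico s₀ s₁ := Icc_subset_Ico_right hs.2
  refine subset_sheet_of_isPreconnected
    (isPreconnected_Icc.image _ Complex.continuous_ofReal.continuousOn) ?_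
    ⟨s₀, mem_image_of_mem _ (left_mem_Icc.2 hs.1),
      self_mem_sheet (h.mem_preimage_ball ((h.realFun_nonneg hreg hs).trans_lt hsR))⟩
    (mem_image_of_mem _ (right_mem_Icc.2 hs.1))
  rintro _ ⟨t, ht, rfl⟩
  refine ⟨(hreg t (hsub ht)).1, mem_ball_zero_iff.2 ?_⟩
  rw [h.norm_toFun_ofReal hreg (hsub ht)]
  exact ((h.strictMonoOn_realFun hreg).monotoneOn (hsub ht) hs ht.2).trans_lt hsR

lemma toFun_eq_powerSum (h : IsPositiveBranch X Y c s₀) (hR : 0 < R)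
    (hsum : ∀ x, 0 ≤ x → x < R → Summable fun n => c n * x ^ n) {t : ℂ}
    (ht : t ∈ X.sheet (ball 0 R) s₀) : Y.den.eval t ≠ 0 ∧ Y.toFun t = powerSum c (X.toFun t) :=
  toFun_eq_comp_of_mem_sheet isOpen_ball (differentiableOn_powerSum h.coeff_nonneg hsum)
    (h.mem_preimage_ball hR) h.parametrizes ht

-- `Y` composed with a local inverse of `X` continues the series through a regular value of `X`.
lemma exists_analyticAt_realFun (h : IsPositiveBranch X Y c s₀) (hreg : IsRegularOn X Y s₀ s₁)
    (hs : s ∈ Ioo s₀ s₁) (hsum : ∀ x, 0 ≤ x → x < X.realFun s → Summable fun n => c n * x ^ n) :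
    ∃ G : ℂ → ℂ, AnalyticAt ℂ G (X.realFun s) ∧
      ∃ᶠ a : ℝ in 𝓝[<] (X.realFun s), G =ᶠ[𝓝 (a : ℂ)] powerSum c := by
  have hmono := h.strictMonoOn_realFun hreg
  have hderiv : ∀ t ∈ Ico s₀ s₁, deriv X.toFun (t : ℂ) ≠ 0 := fun t ht h0 =>
    (hreg t ht).2 (.inl ((deriv_toFun_eq_zero_iff (hreg t ht).1).1 h0))
  have hs' : s ∈ Ico s₀ s₁ := ⟨hs.1.le, hs.2⟩
  have hXs := hreg s hs'
  obtain ⟨G, hG, hGX⟩ := exists_analyticAt_comp_eventuallyEq (analyticAt_toFun hXs.1)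
    (hderiv s hs') (analyticAt_toFun (f := Y) fun h0 => hXs.2 (.inr h0))
  refine ⟨G, h.isReal.toFun_ofReal s ▸ hG, ?_⟩
  have hnear : ∀ᶠ t : ℝ in 𝓝[<] s, t ∈ Ioo s₀ s := Ioo_mem_nhdsLT hs.1
  have hleft : Tendsto X.realFun (𝓝[<] s) (𝓝[<] (X.realFun s)) := tendsto_nhdsWithin_iff.2
    ⟨(hasDerivAt_realFun hXs.1).continuousAt.tendsto.mono_left nhdsWithin_le_nhds,
      hnear.mono fun t ht => hmono ⟨ht.1.le, ht.2.trans hs.2⟩ hs' ht.2⟩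
  refine hleft.frequently (Eventually.frequently ?_)
  have hGX' : ∀ᶠ t : ℝ in 𝓝[<] s, ∀ᶠ u in 𝓝 (t : ℂ), G (X.toFun u) = Y.toFun u :=
    nhdsWithin_le_nhds (Complex.continuous_ofReal.continuousAt.eventually hGX.eventually_nhds)
  filter_upwards [hnear, hGX'] with t ht htG
  have ht' : t ∈ Ico s₀ s₁ := ⟨ht.1.le, ht.2.trans hs.2⟩
  have hXt : X.realFun t < X.realFun s := hmono ht' hs' ht.2
  have hsheet : ∀ᶠ u in 𝓝 (t : ℂ), u ∈ X.sheet (ball 0 (X.realFun s)) s₀ :=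
    (isOpen_sheet isOpen_ball).mem_nhds (h.ofReal_mem_sheet hreg ht' hXt)
  rw [← h.isReal.toFun_ofReal, EventuallyEq,
    ← (analyticAt_toFun (hreg t ht').1).hasStrictDerivAt.map_nhds_eq (hderiv t ht'), eventually_map]
  filter_upwards [htG, hsheet] with u hu hus
  rw [hu, (h.toFun_eq_powerSum ((h.realFun_nonneg hreg ht').trans_lt hXt) hsum hus).2]

-- Otherwise the radius of convergence would be a value of `X` on `[s₀, s₁)`, contradicting
-- Pringsheim's theorem.
lemma summable_realFun (h : IsPositiveBranch X Y c s₀) (hreg : IsRegularOn X Y s₀ s₁)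
    (hs : s ∈ Ico s₀ s₁) : Summable fun n => c n * X.realFun s ^ n := by
  by_contra hns
  obtain ⟨r, hr, hsr⟩ := h.exists_summable
  obtain ⟨R, hR, hRs, hsum, hsing⟩ := exists_singularity_of_not_summable h.coeff_nonneg hr hsr
    (h.realFun_nonneg hreg hs) hns
  have hsub : Icc s₀ s ⊆ Ico s₀ s₁ := Icc_subset_Ico_right hs.2
  have hcont : ContinuousOn X.realFun (Icc s₀ s) := fun t ht =>
    (hasDerivAt_realFun (hreg t (hsub ht)).1).continuousAt.continuousWithinAt
  obtain ⟨q, hq, rfl⟩ := intermediate_value_Icc hs.1 hcont ⟨h.realFun_eq_zero.trans_le hR.le, hRs⟩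
  have hq₀ : s₀ < q := hq.1.lt_of_ne fun h0 => hR.ne' (h0 ▸ h.realFun_eq_zero)
  obtain ⟨G, hG, heq⟩ := h.exists_analyticAt_realFun hreg ⟨hq₀, (hsub hq).2⟩ hsum
  exact hsing G hG heq

lemma mul_pow_le_norm_toFun (h : IsPositiveBranch X Y c s₀) (hreg : IsRegularOn X Y s₀ s₁)
    (hs : s ∈ Ico s₀ s₁) (n : ℕ) : c n * ‖X.toFun s‖ ^ n ≤ ‖Y.toFun s‖ := by
  obtain ⟨t, hst, hts⟩ := exists_between hs.2
  have ht : t ∈ Ico s₀ s₁ := ⟨hs.1.trans hst.le, hts⟩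
  have hXst : X.realFun s < X.realFun t := h.strictMonoOn_realFun hreg hs ht hst
  have hXs := h.realFun_nonneg hreg hs
  have hY := h.toFun_eq_powerSum (hXs.trans_lt hXst) (fun x hx hxt =>
    summable_mul_pow_of_le h.coeff_nonneg hx hxt.le (h.summable_realFun hreg ht))
    (h.ofReal_mem_sheet hreg hs hXst)
  rw [hY.2, h.norm_toFun_ofReal hreg hs, h.isReal.toFun_ofReal]
  exact mul_pow_le_norm_powerSum h.coeff_nonneg hXs (h.summable_realFun hreg hs) n

-- At a pole of `X` the series, being nonconstant with nonnegative terms, would tend to infinity.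
lemma den_ne_zero_of_isRegularOn (h : IsPositiveBranch X Y c s₀) (hc : ∃ n ≠ 0, c n ≠ 0)
    (hreg : IsRegularOn X Y s₀ s₁) (hs : s₀ < s₁) (hY : Y.den.eval (s₁ : ℂ) ≠ 0) :
    X.den.eval (s₁ : ℂ) ≠ 0 := by
  intro hpole
  obtain ⟨n, hn, hcn⟩ := hc
  have hofReal : Tendsto (fun t : ℝ => (t : ℂ)) (𝓝[<] s₁) (𝓝[≠] (s₁ : ℂ)) :=
    tendsto_nhdsWithin_iff.2
      ⟨Complex.continuous_ofReal.continuousAt.tendsto.mono_left nhdsWithin_le_nhds,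
        eventually_mem_nhdsWithin.mono fun t ht => by simpa using ne_of_lt ht⟩
  have hX : Tendsto (fun t : ℝ => c n * ‖X.toFun t‖ ^ n) (𝓝[<] s₁) atTop :=
    ((tendsto_pow_atTop hn).comp (tendsto_norm_cobounded_atTop.comp
      ((tendsto_toFun_nhdsNE_of_pole hpole).comp hofReal))).const_mul_atTop
      ((h.coeff_nonneg n).lt_of_ne' hcn)
  refine not_tendsto_atTop_of_tendsto_nhds (((analyticAt_toFun hY).continuousAt.tendsto.comp
    (hofReal.mono_right nhdsWithin_le_nhds)).norm) (tendsto_atTop_mono' _ ?_ hX)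
  filter_upwards [Ioo_mem_nhdsLT hs] with t ht
  exact h.mul_pow_le_norm_toFun hreg ⟨ht.1.le, ht.2⟩ n

lemma isRegularOn_of_not_isCriticalPt (h : IsPositiveBranch X Y c s₀) (hc : ∃ n ≠ 0, c n ≠ 0)
    (hcrit : ∀ s ∈ Ico s₀ s₁, ¬ IsCriticalPt X Y (s : ℂ)) : IsRegularOn X Y s₀ s₁ := by
  refine fun s hs => ⟨fun hpole => ?_, hcrit s hs⟩
  have hclosed : IsClosed {t : ℝ | X.den.eval (t : ℂ) = 0} :=
    isClosed_singleton.preimage (X.den.continuous.comp Complex.continuous_ofReal)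
  obtain ⟨q, ⟨hqI, hq⟩, hleast⟩ := (isCompact_Icc.inter_right hclosed).exists_isLeast
    ⟨s, right_mem_Icc.2 hs.1, hpole⟩
  have hq₁ : q < s₁ := hqI.2.trans_lt hs.2
  have hq₀ : s₀ < q := hqI.1.lt_of_ne fun h0 => h.den_ne_zero (h0 ▸ hq)
  refine h.den_ne_zero_of_isRegularOn hc (s₁ := q) (fun t ht => ⟨fun ht0 => ?_, ?_⟩) hq₀ ?_ hq
  · exact ht.2.not_ge (hleast ⟨⟨ht.1, ht.2.le.trans hqI.2⟩, ht0⟩)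
  · exact hcrit t ⟨ht.1, ht.2.trans hq₁⟩
  · exact fun h0 => hcrit q ⟨hqI.1, hq₁⟩ (.inr h0)

lemma realFun_lt (h : IsPositiveBranch X Y c s₀) (hreg : IsRegularOn X Y s₀ sc)
    (hlim : Tendsto X.realFun (𝓝[<] sc) (𝓝 xc)) (hs : s ∈ Ico s₀ sc) :
    X.realFun s < xc := by
  have hmono := h.strictMonoOn_realFun hreg
  obtain ⟨t, hst, hts⟩ := exists_between hs.2
  have ht : t ∈ Ico s₀ sc := ⟨hs.1.trans hst.le, hts⟩
  refine (hmono hs ht hst).trans_le (ge_of_tendsto hlim ?_)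
  filter_upwards [Ioo_mem_nhdsLT hts] with u hu
  exact hmono.monotoneOn ht ⟨ht.1.trans hu.1.le, hu.2⟩ hu.1.le

lemma summable_of_lt (h : IsPositiveBranch X Y c s₀) (hreg : IsRegularOn X Y s₀ sc)
    (hlt : s₀ < sc) (hlim : Tendsto X.realFun (𝓝[<] sc) (𝓝 xc)) {x : ℝ} (hx : 0 ≤ x)
    (hxxc : x < xc) : Summable fun n => c n * x ^ n := by
  obtain ⟨s, hxs, hs⟩ := ((hlim.eventually_const_lt hxxc).and (Ioo_mem_nhdsLT hlt)).exists
  exact summable_mul_pow_of_le h.coeff_nonneg hx hxs.le (h.summable_realFun hreg ⟨hs.1.le, hs.2⟩)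

lemma mem_frontier_sheet (h : IsPositiveBranch X Y c s₀) (hreg : IsRegularOn X Y s₀ sc)
    (hlt : s₀ < sc) (hlim : Tendsto X.realFun (𝓝[<] sc) (𝓝 xc)) (hxc : X.toFun (sc : ℂ) = xc)
    {U : Set ℂ} (hU : IsOpen U) (hball : ball 0 xc ⊆ U) (hxcU : (xc : ℂ) ∉ U) :
    (sc : ℂ) ∈ frontier (X.sheet U s₀) := by
  rw [(isOpen_sheet hU).frontier_eq]
  refine ⟨mem_closure_of_tendsto (f := fun s : ℝ => (s : ℂ)) (b := 𝓝[<] sc)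
    (Complex.continuous_ofReal.continuousAt.tendsto.mono_left nhdsWithin_le_nhds) ?_,
    fun hmem => hxcU (hxc ▸ (sheet_subset_preimage hmem).2)⟩
  filter_upwards [Ioo_mem_nhdsLT hlt] with s hs
  have hs' : s ∈ Ico s₀ sc := ⟨hs.1.le, hs.2⟩
  exact sheet_mono hball (h.ofReal_mem_sheet hreg hs' (h.realFun_lt hreg hlim hs'))

lemma parametrizes_of_eqOn (h : IsPositiveBranch X Y c s₀) (hR : 0 < R)
    (hG : EqOn G (powerSum c) (ball 0 R)) :
    ∀ᶠ t in 𝓝 (s₀ : ℂ), Y.den.eval t ≠ 0 ∧ Y.toFun t = G (X.toFun t) := by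
  filter_upwards [h.parametrizes, (isOpen_preimage isOpen_ball).mem_nhds (h.mem_preimage_ball hR)]
    with t ht htR using ⟨ht.1, ht.2.trans (hG htR.2).symm⟩

lemma exists_continuation_slitDisk (h : IsPositiveBranch X Y c s₀)
    (hX : X.evalInf = OnePoint.infty) (hε : 0 < ε) (hεx : ε < xc)
    (hsum : ∀ x, 0 ≤ x → x < xc → Summable fun n => c n * x ^ n)
    (hreg : ∀ s ∈ X.preimage (slitAnnulus (xc - ε) (xc + ε)), ¬ IsCriticalPt X Y s) :
    ∃ G : ℂ → ℂ, DifferentiableOn ℂ G (slitDisk xc ε) ∧ EqOn G (powerSum c) (ball 0 xc) := by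
  rw [slitDisk_eq_union (hε.trans hεx) hε]
  exact exists_continuation hX isOpen_ball (convex_ball 0 xc).isPreconnected
    (differentiableOn_powerSum h.coeff_nonneg hsum) (h.mem_preimage_ball (hε.trans hεx))
    h.parametrizes isOpen_slitAnnulus
    (isSimplyConnected_slitAnnulus (sub_pos.2 hεx) (by linarith))
    (isConnected_ball_inter_slitAnnulus hε hεx) hreg

lemma lt_of_isCriticalPt (h : IsPositiveBranch X Y c s₀) (hle : s₀ ≤ sc)
    (hcrit : IsCriticalPt X Y (sc : ℂ)) : s₀ < sc := by
  refine hle.lt_of_ne ?_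
  rintro rfl
  refine hcrit.elim (fun hX => h.deriv_pos.ne' ?_) h.parametrizes.self_of_nhds.1
  rw [(deriv_toFun_eq_zero_iff h.den_ne_zero).2 hX, Complex.zero_re]

end IsPositiveBranch

end RationalMap

open RationalMap in
theorem statement18_general (X Y : RationalMap) (hreal_X : X.IsReal)
    (hXinf : X.evalInf = OnePoint.infty) (hinj : X.GenericallyInjective Y)
    (φ : ℂ → ℂ) (c : ℕ → ℝ) (r : ℝ) (hr : 0 < r)
    (hc : ∀ x : ℂ, ‖x‖ < r → HasSum (fun n : ℕ => (c n : ℂ) * x ^ n) (φ x))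
    (hc_nonneg : ∀ n, 0 ≤ c n) (hnonconst : ∃ n ≠ 0, c n ≠ 0) (s₀ : ℝ)
    (hs₀ : X.eval (s₀ : ℂ) = ((0 : ℂ) : OnePoint ℂ) ∧
      ∀ᶠ t in 𝓝 (s₀ : ℂ), Y.eval t = ((φ (X.toFun t) : ℂ) : OnePoint ℂ))
    (hderiv : 0 < (deriv X.toFun (s₀ : ℂ)).re)
    (sc : ℝ) (hsc : IsLeast {s : ℝ | s₀ ≤ s ∧ IsCriticalPt X Y (s : ℂ)} sc)
    (xc : ℝ) (hxc : X.toFun (sc : ℂ) = xc) (hxc_pos : 0 < xc)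
    (huniq : ∀ s, IsCriticalPt X Y s → X.den.eval s ≠ 0 → ‖X.toFun s‖ = xc → X.toFun s = xc) :
    ∃ (V : Set ℂ) (ε : ℝ), IsOpen V ∧ (s₀ : ℂ) ∈ V ∧ (sc : ℂ) ∈ frontier V ∧ 0 < ε ∧
      BijOn X.toFun V (slitDisk xc ε) ∧
      (∀ s ∈ V, AnalyticAt ℂ X.toFun s ∧ deriv X.toFun s ≠ 0) ∧
      ∃ g : ℂ → ℂ, (∀ w ∈ slitDisk xc ε, AnalyticAt ℂ g w) ∧ ∀ᶠ x in 𝓝 0, g x = φ x := by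
  have h := IsPositiveBranch.of_hasSum hreal_X hr hc hc_nonneg hs₀ hderiv
  have hlt := h.lt_of_isCriticalPt hsc.1.1 hsc.1.2
  have hreg := h.isRegularOn_of_not_isCriticalPt hnonconst fun s hs hcrit =>
    hs.2.not_ge (hsc.2 ⟨hs.1, hcrit⟩)
  have hlim := tendsto_realFun_nhdsLT hxc hxc_pos
  obtain ⟨ε, ⟨hε, hεxc⟩, hann⟩ := exists_margin_not_isCriticalPt hXinf hxc_pos huniq
  obtain ⟨G, hG, hGc⟩ := h.exists_continuation_slitDisk hXinf hε hεxc
    (fun x => h.summable_of_lt hreg hlt hlim) hann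
  have hball := ball_subset_slitDisk hxc_pos hε
  have hs₀V : (s₀ : ℂ) ∈ X.preimage (slitDisk xc ε) :=
    (h.mem_preimage_ball hxc_pos).imp_right fun hs => hball hs
  have hbij := bijOn_sheet hXinf hinj isOpen_slitDisk (isPreconnected_slitDisk hε hεxc) hG hs₀V
    (h.parametrizes_of_eqOn hxc_pos hGc)
  refine ⟨X.sheet (slitDisk xc ε) s₀, ε, isOpen_sheet isOpen_slitDisk, self_mem_sheet hs₀V,
    h.mem_frontier_sheet hreg hlt hlim hxc isOpen_slitDisk hball (ofReal_notMem_slitDisk hε), hε,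
    hbij, fun s hs => ⟨analyticAt_toFun (sheet_subset_preimage hs).1, ?_⟩, G,
    fun w hw => hG.analyticAt (isOpen_slitDisk.mem_nhds hw), ?_⟩
  · exact deriv_ne_zero_of_injOn (isOpen_sheet isOpen_slitDisk)
      (differentiableOn_toFun.mono fun t ht => (sheet_subset_preimage ht).1) hbij.injOn hs
  · filter_upwards [ball_mem_nhds 0 hr, ball_mem_nhds 0 hxc_pos] with x hxr hx
    exact (hGc hx).trans (hc x (mem_ball_zero_iff.1 hxr)).tsum_eq

/-- Proposition `RP dom sing` (iii): in the setting of the previous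
proposition, if `s_c` is the only critical point `s` of `P` with `|X(s)| = x_c`, then
there is an open neighborhood `V` of `s₀` with `s_c ∈ ∂V` and `ε > 0` such that `X`
restricted to `V` is a conformal bijection onto the slit disk at `x_c` of margin `ε`,
and `φ` admits an analytic continuation to this slit disk. -/
theorem statement18 (E : MvPolynomial (Fin 2) ℂ) (hE : Irreducible E)
    (X Y : RationalMap) (hpar : IsParametrization E X Y) (hprop : IsProper E X Y)
    (hreal_X : X.IsReal) (hreal_Y : Y.IsReal)
    (hXinf : X.evalInf = OnePoint.infty)
    (φ : ℂ → ℂ) (c : ℕ → ℝ) (r : ℝ) (hr : 0 < r)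
    (hc : ∀ x : ℂ, ‖x‖ < r → HasSum (fun n : ℕ => (c n : ℂ) * x ^ n) (φ x))
    (hc_nonneg : ∀ n, 0 ≤ c n)
    (hnonpoly : ∀ N : ℕ, ∃ n : ℕ, N ≤ n ∧ c n ≠ 0)
    (heq : ∀ᶠ x in nhds (0 : ℂ), evalE E x (φ x) = 0)
    -- `s₀` parametrizes `φ` locally at `0`, with positive real derivative
    (s₀ : ℝ)
    (hs₀ : X.eval ((s₀ : ℝ) : ℂ) = ((0 : ℂ) : OnePoint ℂ) ∧
      ∀ᶠ t in nhds ((s₀ : ℝ) : ℂ), Y.eval t = ((φ (X.toFun t) : ℂ) : OnePoint ℂ))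
    (hderiv : ∃ d : ℝ, deriv X.toFun ((s₀ : ℝ) : ℂ) = (d : ℂ) ∧ 0 < d)
    -- `s_c = inf{s ≥ s₀ : s critical}` and `x_c = X(s_c)`
    (sc : ℝ) (hsc : IsLeast {s : ℝ | s₀ ≤ s ∧ IsCriticalPt X Y ((s : ℝ) : ℂ)} sc)
    (xc : ℝ) (hxc : X.toFun ((sc : ℝ) : ℂ) = (xc : ℂ)) (hxc_pos : 0 < xc)
    -- `s_c` is the only critical point on the circle `|X(s)| = x_c`
    (huniq : ∀ s : ℂ, IsCriticalPt X Y s → X.den.eval s ≠ 0 → ‖X.toFun s‖ = xc →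
      s = ((sc : ℝ) : ℂ)) :
    ∃ (V : Set ℂ) (ε : ℝ), IsOpen V ∧ ((s₀ : ℝ) : ℂ) ∈ V ∧ ((sc : ℝ) : ℂ) ∈ frontier V ∧
      0 < ε ∧
      Set.BijOn X.toFun V (slitDisk xc ε) ∧
      (∀ s ∈ V, AnalyticAt ℂ X.toFun s ∧ deriv X.toFun s ≠ 0) ∧
      ∃ g : ℂ → ℂ, (∀ w ∈ slitDisk xc ε, AnalyticAt ℂ g w) ∧
        (∀ᶠ x in nhds (0 : ℂ), g x = φ x) := by
  obtain ⟨d, hd, hdpos⟩ := hderiv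
  exact statement18_general X Y hreal_X hXinf
    (RationalMap.genericallyInjective_of_isProper hpar hprop hXinf) φ c r hr hc hc_nonneg
    ((hnonpoly 1).imp fun n hn => ⟨Nat.one_le_iff_ne_zero.1 hn.1, hn.2⟩) s₀ hs₀ (by rwa [hd]) sc hsc
    xc hxc hxc_pos fun s hs hden hnorm => huniq s hs hden hnorm ▸ hxc
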